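/- Let b ≥ 3, let Λ ⊆ ℝ^b be a countable additive subgroup, and let W ⊆ ℝ^b be a positive three-dimensional subspace with W^⊥ ∩ Λ = {0}. Then the set of points [z] of the twistor line T_W for which there exists some α ∈ Λ \ {0} with ⟨z, α⟩ = 0 is countable. -/

import Mathlib

noncomputable section

open scoped BigOperators

def eps {b : ℕ} (i : Fin b) : ℝ := if (i : ℕ) < 3 then 1 else -1

def bR {b : ℕ} (v w : Fin b → ℝ) : ℝ := ∑ i, eps i * v i * w i

def qR {b : ℕ} (v : Fin b → ℝ) : ℝ := bR v v

def bC {b : ℕ} (z w : Fin b → ℂ) : ℂ := ∑ i, (eps i : ℂ) * z i * w i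

def qC {b : ℕ} (z : Fin b → ℂ) : ℂ := bC z z

def conjVec {b : ℕ} (z : Fin b → ℂ) : Fin b → ℂ := fun i => (starRingEnd ℂ) (z i)

def rePart {b : ℕ} (z : Fin b → ℂ) : Fin b → ℝ := fun i => (z i).re
def imPart {b : ℕ} (z : Fin b → ℂ) : Fin b → ℝ := fun i => (z i).im

def cplx {b : ℕ} (v : Fin b → ℝ) : Fin b → ℂ := fun i => (v i : ℂ)

def isPeriodVec {b : ℕ} (z : Fin b → ℂ) : Prop :=
  qC z = 0 ∧ 0 < (bC z (conjVec z)).re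

instance projectivizationTopology (K V : Type*) [DivisionRing K] [AddCommGroup V] [Module K V]
    [TopologicalSpace V] : TopologicalSpace (Projectivization K V) :=
  inferInstanceAs (TopologicalSpace (Quotient (projectivizationSetoid K V)))

def periodDomain (b : ℕ) : Set (Projectivization ℂ (Fin b → ℂ)) :=
  {x | ∃ (z : Fin b → ℂ) (hz : z ≠ 0), Projectivization.mk ℂ z hz = x ∧ isPeriodVec z}

def Pspan {b : ℕ} (z : Fin b → ℂ) : Submodule ℝ (Fin b → ℝ) :=
  Submodule.span ℝ {rePart z, imPart z}

def PosDefOn {b : ℕ} (W : Submodule ℝ (Fin b → ℝ)) : Prop :=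
  ∀ v ∈ W, v ≠ 0 → 0 < qR v

def twistorLine {b : ℕ} (W : Submodule ℝ (Fin b → ℝ)) :
    Set (Projectivization ℂ (Fin b → ℂ)) :=
  {x | ∃ (z : Fin b → ℂ) (hz : z ≠ 0), Projectivization.mk ℂ z hz = x ∧ isPeriodVec z ∧
    rePart z ∈ W ∧ imPart z ∈ W}

/-- `W^⊥ ∩ Λ = {0}`: the twistor line / three-space `W` is generic w.r.t. `Λ`. -/
def IsGenericW {b : ℕ} (Λ : AddSubgroup (Fin b → ℝ)) (W : Submodule ℝ (Fin b → ℝ)) : Prop :=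
  ∀ α ∈ Λ, (∀ w ∈ W, bR α w = 0) → α = 0

def bRlin {b : ℕ} (p : Fin b → ℝ) : (Fin b → ℝ) →ₗ[ℝ] ℝ where
  toFun v := bR v p
  map_add' x y := by
    unfold bR
    rw [← Finset.sum_add_distrib]
    exact Finset.sum_congr rfl fun i _ => by simp [Pi.add_apply]; ring
  map_smul' c x := by
    show bR (c • x) p = (RingHom.id ℝ) c • bR x p
    unfold bR
    rw [RingHom.id_apply, smul_eq_mul, Finset.mul_sum]
    exact Finset.sum_congr rfl fun i _ => by simp [Pi.smul_apply]; ring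

def perpSubmodule {b : ℕ} (P : Submodule ℝ (Fin b → ℝ)) : Submodule ℝ (Fin b → ℝ) :=
  ⨅ p ∈ P, LinearMap.ker (bRlin p)

lemma bR_comb {b : ℕ} (u v w x : Fin b → ℝ) (s t r : ℝ) :
    bR (s • u + t • v + r • w) x = s * bR u x + t * bR v x + r * bR w x := by
  unfold bR
  simp only [Finset.mul_sum, ← Finset.sum_add_distrib]
  exact Finset.sum_congr rfl fun i _ => by simp; ring

lemma bR_comm' {b : ℕ} (u v : Fin b → ℝ) : bR u v = bR v u := by
  unfold bR
  exact Finset.sum_congr rfl fun i _ => by ring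

lemma bC_cplx_re {b : ℕ} (z : Fin b → ℂ) (α : Fin b → ℝ) :
    (bC z (cplx α)).re = bR (rePart z) α := by
  unfold bC bR
  rw [Complex.re_sum]
  exact Finset.sum_congr rfl fun i _ => by simp [cplx, rePart]

lemma bC_cplx_im {b : ℕ} (z : Fin b → ℂ) (α : Fin b → ℝ) :
    (bC z (cplx α)).im = bR (imPart z) α := by
  unfold bC bR
  rw [Complex.im_sum]
  exact Finset.sum_congr rfl fun i _ => by simp [cplx, imPart]

lemma qC_re' {b : ℕ} (z : Fin b → ℂ) :
    (qC z).re = bR (rePart z) (rePart z) - bR (imPart z) (imPart z) := by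
  unfold qC bC bR
  rw [Complex.re_sum, ← Finset.sum_sub_distrib]
  exact Finset.sum_congr rfl fun i _ => by simp [imPart, rePart]

lemma qC_im' {b : ℕ} (z : Fin b → ℂ) :
    (qC z).im = 2 * bR (rePart z) (imPart z) := by
  unfold qC bC bR
  rw [Complex.im_sum, Finset.mul_sum]
  exact Finset.sum_congr rfl fun i _ => by simp [imPart, rePart]; ring

lemma bC_smul' {b : ℕ} (c : ℂ) (z w : Fin b → ℂ) : bC (c • z) w = c * bC z w := by
  unfold bC
  rw [Finset.mul_sum]
  exact Finset.sum_congr rfl fun i _ => by simp; ring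

/-- Points of the isotropic cone of `W` orthogonal to `α`, in real terms. -/
def goodVec {b : ℕ} (W : Submodule ℝ (Fin b → ℝ)) (α : Fin b → ℝ) (z : Fin b → ℂ) : Prop :=
  z ≠ 0 ∧ rePart z ∈ W ∧ imPart z ∈ W ∧ qC z = 0 ∧ bC z (cplx α) = 0

lemma goodVec_facts {b : ℕ} {W : Submodule ℝ (Fin b → ℝ)} (hpos : PosDefOn W)
    {α : Fin b → ℝ} {z : Fin b → ℂ} (h : goodVec W α z) :
    bR (rePart z) (rePart z) = bR (imPart z) (imPart z) ∧ bR (rePart z) (imPart z) = 0 ∧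
    0 < bR (rePart z) (rePart z) ∧ bR (rePart z) α = 0 ∧ bR (imPart z) α = 0 := by
  obtain ⟨h0, hu, hv, hq, ha⟩ := h
  have h1 : bR (rePart z) (rePart z) = bR (imPart z) (imPart z) := by
    have := qC_re' z
    rw [hq, Complex.zero_re] at this
    linarith
  have h2 : bR (rePart z) (imPart z) = 0 := by
    have := qC_im' z
    rw [hq, Complex.zero_im] at this
    linarith
  refine ⟨h1, h2, ?_, ?_, ?_⟩
  · by_cases hu0 : rePart z = 0
    · have hv0 : imPart z ≠ 0 := by
        intro hv0
        apply h0
        funext i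
        exact Complex.ext (congrFun hu0 i) (congrFun hv0 i)
      rw [h1]
      exact hpos _ hv hv0
    · exact hpos _ hu hu0
  · rw [← bC_cplx_re, ha, Complex.zero_re]
  · rw [← bC_cplx_im, ha, Complex.zero_im]

lemma goodVec_unique {b : ℕ} {W : Submodule ℝ (Fin b → ℝ)} (hpos : PosDefOn W)
    (hdim : Module.finrank ℝ ↥W = 3)
    {α w₀ : Fin b → ℝ} (hw : w₀ ∈ W) (hαw : bR w₀ α ≠ 0) {z z' : Fin b → ℂ}
    (h : goodVec W α z) (h' : goodVec W α z') :
    ∃ c : ℂ, z' = c • z ∨ z' = c • conjVec z := by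
  obtain ⟨e1, e2, e3, e4, e5⟩ := goodVec_facts hpos h
  obtain ⟨f1, f2, f3, f4, f5⟩ := goodVec_facts hpos h'
  have hu := h.2.1
  have hv := h.2.2.1
  have hu' := h'.2.1
  have hv' := h'.2.2.1
  have hzd : z = fun i => (⟨rePart z i, imPart z i⟩ : ℂ) := rfl
  have hzd' : z' = fun i => (⟨rePart z' i, imPart z' i⟩ : ℂ) := rfl
  have hcd : conjVec z = fun i => (⟨rePart z i, -imPart z i⟩ : ℂ) := rfl
  rw [hcd, hzd', hzd]
  clear hzd hzd' hcd h h'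
  generalize rePart z = u at *
  generalize imPart z = v at *
  generalize rePart z' = u' at *
  generalize imPart z' = v' at *
  have e2' : bR v u = 0 := by rw [bR_comm', e2]
  have hli : LinearIndependent ℝ ![(⟨u, hu⟩ : W), ⟨v, hv⟩, ⟨w₀, hw⟩] := by
    rw [Fintype.linearIndependent_iff]
    intro g hg
    have hg' : g 0 • u + g 1 • v + g 2 • w₀ = 0 := by
      have := congrArg Subtype.val hg
      simpa [Fin.sum_univ_three] using this
    have zb : ∀ x : Fin b → ℝ, bR 0 x = 0 := fun x => by simp [bR]
    have k2 : g 2 = 0 := by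
      have := bR_comb u v w₀ α (g 0) (g 1) (g 2)
      rw [hg', zb, e4, e5] at this
      simpa [hαw] using this.symm
    have k0 : g 0 = 0 := by
      have := bR_comb u v w₀ u (g 0) (g 1) (g 2)
      rw [hg', zb, e2', k2] at this
      simpa [e3.ne'] using this.symm
    have k1 : g 1 = 0 := by
      have := bR_comb u v w₀ v (g 0) (g 1) (g 2)
      rw [hg', zb, e2, k2, ← e1] at this
      simpa [e3.ne'] using this.symm
    intro i
    fin_cases i <;> assumption
  have hsp := hli.span_eq_top_of_card_eq_finrank' (by simp [hdim])
  have key : ∀ x ∈ W, bR x α = 0 → ∃ a c : ℝ, x = a • u + c • v := by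
    intro x hx hxa
    have hm : (⟨x, hx⟩ : W) ∈ Submodule.span ℝ (Set.range ![(⟨u, hu⟩ : W), ⟨v, hv⟩, ⟨w₀, hw⟩]) := by
      rw [hsp]; trivial
    rw [Submodule.mem_span_range_iff_exists_fun] at hm
    obtain ⟨g, hg⟩ := hm
    have hg' : g 0 • u + g 1 • v + g 2 • w₀ = x := by
      have := congrArg Subtype.val hg
      simpa [Fin.sum_univ_three] using this
    have k2 : g 2 = 0 := by
      have := bR_comb u v w₀ α (g 0) (g 1) (g 2)
      rw [hg', hxa, e4, e5] at this
      simpa [hαw] using this.symm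
    refine ⟨g 0, g 1, ?_⟩
    rw [← hg', k2]; simp
  obtain ⟨a, c, rfl⟩ := key u' hu' f4
  obtain ⟨d, e, rfl⟩ := key v' hv' f5
  have ex : ∀ (s t : ℝ) (x : Fin b → ℝ), bR (s • u + t • v) x = s * bR u x + t * bR v x := by
    intro s t x
    simpa using bR_comb u v 0 x s t 0
  have ex2 : ∀ s t s' t' : ℝ, bR (s • u + t • v) (s' • u + t' • v)
      = (s * s' + t * t') * bR u u := by
    intro s t s' t'
    rw [ex, bR_comm' u, bR_comm' v, ex, ex, e2, e2', ← e1]; ring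
  rw [ex2, ex2] at f1
  rw [ex2] at f2
  have g1 := mul_right_cancel₀ e3.ne' f1
  have g2 : a * d + c * e = 0 := by simpa [e3.ne'] using f2
  have hprod : ((⟨c, e⟩ : ℂ) - Complex.I * ⟨a, d⟩) * ((⟨c, e⟩ : ℂ) + Complex.I * ⟨a, d⟩) = 0 := by
    apply Complex.ext
    · simp; linarith
    · simp; linarith
  refine ⟨⟨a, d⟩, ?_⟩
  rcases mul_eq_zero.mp hprod with hp | hp
  · left
    have r1 := congrArg Complex.re hp
    have r2 := congrArg Complex.im hp
    simp at r1 r2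
    have hc : c = -d := by linarith
    have he : e = a := by linarith
    subst hc he
    funext i
    apply Complex.ext <;> simp <;> ring
  · right
    have r1 := congrArg Complex.re hp
    have r2 := congrArg Complex.im hp
    simp at r1 r2
    have hc : c = d := by linarith
    have he : e = -a := by linarith
    subst hc he
    funext i
    apply Complex.ext <;> simp [rePart, imPart] <;> ring

/-- on a generic twistor line, only countably many points are orthogonal
to some nonzero element of `Λ`. -/
theorem stmt8 (b : ℕ) (hb : 3 ≤ b) (Λ : AddSubgroup (Fin b → ℝ))
    (hΛ : (Λ : Set (Fin b → ℝ)).Countable)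
    (W : Submodule ℝ (Fin b → ℝ)) (hdim : Module.finrank ℝ ↥W = 3) (hpos : PosDefOn W)
    (hgen : IsGenericW Λ W) :
    Set.Countable {x | x ∈ twistorLine W ∧ ∃ (z : Fin b → ℂ) (h : z ≠ 0),
      Projectivization.mk ℂ z h = x ∧ ∃ α ∈ Λ, α ≠ 0 ∧ bC z (cplx α) = 0} := by
  have hsub : {x | x ∈ twistorLine W ∧ ∃ (z : Fin b → ℂ) (h : z ≠ 0),
      Projectivization.mk ℂ z h = x ∧ ∃ α ∈ Λ, α ≠ 0 ∧ bC z (cplx α) = 0} ⊆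
      ⋃ α ∈ {α | α ∈ (Λ : Set (Fin b → ℝ)) ∧ α ≠ 0},
        {x | ∃ (z : Fin b → ℂ) (h : z ≠ 0), Projectivization.mk ℂ z h = x ∧ goodVec W α z} := by
    rintro x ⟨⟨z, hz, hzx, hper, hre, him⟩, z', hz', hzx', α, hα, hα0, hb0⟩
    simp only [Set.mem_iUnion]
    refine ⟨α, ⟨hα, hα0⟩, z, hz, hzx, hz, hre, him, hper.1, ?_⟩
    rw [← hzx', Projectivization.mk_eq_mk_iff'] at hzx
    obtain ⟨c, rfl⟩ := hzx
    rw [bC_smul', hb0, mul_zero]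
  refine Set.Countable.mono hsub (Set.Countable.biUnion (hΛ.mono fun α h => h.1) ?_)
  rintro α ⟨hα, hα0⟩
  have hex : ∃ w ∈ W, bR w α ≠ 0 := by
    by_contra hcon
    push Not at hcon
    exact hα0 (hgen α hα fun w hw => by rw [bR_comm']; exact hcon w hw)
  obtain ⟨w₀, hw, hw0⟩ := hex
  by_cases hne : ∃ z, goodVec W α z
  · obtain ⟨z, hz⟩ := hne
    have hcz : conjVec z ≠ 0 := by
      intro h
      apply hz.1
      funext i
      have := congrFun h i
      simpa [conjVec] using this
    refine Set.Countable.mono ?_ (Set.toFinite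
      {Projectivization.mk ℂ z hz.1, Projectivization.mk ℂ (conjVec z) hcz}).countable
    rintro x ⟨z', hz', rfl, hg⟩
    obtain ⟨c, hc | hc⟩ := goodVec_unique hpos hdim hw hw0 hz hg
    · left
      rw [Projectivization.mk_eq_mk_iff']
      exact ⟨c, hc.symm⟩
    · right
      rw [Set.mem_singleton_iff, Projectivization.mk_eq_mk_iff']
      exact ⟨c, hc.symm⟩
  · refine Set.Countable.mono ?_ Set.countable_empty
    rintro x ⟨z', hz', rfl, hg⟩
    exact hne ⟨z', hg⟩
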